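/- arXiv:2605.11287 — 3 statements merged into one kernel-verified Lean document; each statement's English description precedes it below -/
import Mathlib

section
/- Let N, d, d_h ≥ 1 be integers and let m ∈ {1,…,N}. Suppose t ∈ ℝ^N does not belong to the standard simplex Δ^{N-1}. Then for every choice of parameter matrices W_Q, W_K ∈ ℝ^{d_h×d}, it is NOT the case that o_m(H) = ∑_{n=1}^N t_n · H_{n,1} holds for all H ∈ ℝ^{N×d}. (Proposition 1: the simplex-constrained mixing limitation of single-head softmax self-attention.) -/
open Matrix BigOperators Real

/-- The score matrix `A(H) = H Wqᵀ Wk Hᵀ` of single-head self-attention. -/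
noncomputable def score {N d dh : ℕ} (Wq Wk : Matrix (Fin dh) (Fin d) ℝ)
    (H : Matrix (Fin N) (Fin d) ℝ) : Matrix (Fin N) (Fin N) ℝ :=
  H * Wqᵀ * Wk * Hᵀ

/-- The softmax attention kernel `a_{m,n}(H)`. -/
noncomputable def attnKernel {N d dh : ℕ} (Wq Wk : Matrix (Fin dh) (Fin d) ℝ)
    (H : Matrix (Fin N) (Fin d) ℝ) (m n : Fin N) : ℝ :=
  Real.exp (score Wq Wk H m n) / ∑ j, Real.exp (score Wq Wk H m j)

/-- **Proposition 1 (simplex-constrained mixing limitation).**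
If the target row `t ∈ ℝ^N` is not in the standard simplex `Δ^{N-1}`, then for
every choice of parameter matrices `Wq, Wk ∈ ℝ^{dh×d}`, single-head softmax
self-attention with scalar values `v_n = H_{n,1}` cannot satisfy
`o_m(H) = ∑ n, t_n · H_{n,1}` for all inputs `H ∈ ℝ^{N×d}`. -/
theorem softmax_simplex_limitation
    {N d dh : ℕ} (hN : 1 ≤ N) (hd : 1 ≤ d) (hdh : 1 ≤ dh)
    (m : Fin N) (t : Fin N → ℝ)
    (ht : ¬ ((∀ n, 0 ≤ t n) ∧ ∑ n, t n = 1)) :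
    ∀ Wq Wk : Matrix (Fin dh) (Fin d) ℝ,
      ¬ (∀ H : Matrix (Fin N) (Fin d) ℝ,
          ∑ n, attnKernel Wq Wk H m n * H n ⟨0, hd⟩ = ∑ n, t n * H n ⟨0, hd⟩) := by
  intro Wq Wk h
  apply ht
  constructor
  · intro k
    have hk := h (fun n _ => if n = k then 1 else 0)
    simp only [mul_ite, mul_one, mul_zero, Finset.sum_ite_eq', Finset.mem_univ, if_true] at hk
    rw [← hk]
    unfold attnKernel
    positivity
  · have h1 := h (fun _ _ => 1)
    simp only [mul_one] at h1
    rw [← h1]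
    unfold attnKernel
    rw [← Finset.sum_div]
    apply div_self
    have : 0 < ∑ j, Real.exp (score Wq Wk (fun _ _ => 1) m j) :=
      Finset.sum_pos (fun _ _ => Real.exp_pos _) ⟨m, Finset.mem_univ m⟩
    exact this.ne'
end

section
/- Let N, d, d_h ≥ 1 and let T ∈ ℝ^{N×N} satisfy T 1 = 0 (every row sums to zero). Then for every row index m and every choice of W_Q, W_K ∈ ℝ^{d_h×d}, it is NOT the case that o_m(H) = ∑_{n=1}^N T_{m,n} · H_{n,1} for all H ∈ ℝ^{N×d}. (Zero-row-sum operators are unrealizable by single-head softmax self-attention, the failure mode common to harmonic continuation, residualization, and local quadrature projection.) -/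
open Matrix BigOperators Real

/-- **Zero-row-sum operators are unrealizable by single-head softmax
self-attention.** If every row of `T ∈ ℝ^{N×N}` sums to zero (`T 1 = 0`), then
for every row `m` and all parameters `Wq, Wk`, it is not the case that
`o_m(H) = ∑ n, T_{m,n} · H_{n,1}` for all `H ∈ ℝ^{N×d}`. -/
theorem zero_row_sum_unrealizable
    {N d dh : ℕ} (hN : 1 ≤ N) (hd : 1 ≤ d) (hdh : 1 ≤ dh)
    (T : Matrix (Fin N) (Fin N) ℝ)
    (hT : T *ᵥ (fun _ => (1 : ℝ)) = 0) :
    ∀ (m : Fin N) (Wq Wk : Matrix (Fin dh) (Fin d) ℝ),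
      ¬ (∀ H : Matrix (Fin N) (Fin d) ℝ,
          ∑ n, attnKernel Wq Wk H m n * H n ⟨0, hd⟩ = ∑ n, T m n * H n ⟨0, hd⟩) := by
  intro m Wq Wk h
  have h1 := h (fun _ _ => 1)
  have h2 : ∑ n, T m n = 0 := by
    have := congrFun hT m
    simpa [Matrix.mulVec, dotProduct] using this
  have hpos : 0 < ∑ j, Real.exp (score Wq Wk (fun _ _ => 1) m j) :=
    Finset.sum_pos (fun j _ => Real.exp_pos _) ⟨m, Finset.mem_univ m⟩
  simp only [mul_one, h2, attnKernel] at h1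
  rw [← Finset.sum_div, div_self hpos.ne'] at h1
  exact one_ne_zero h1
end

section
/- Let N, d, d_h ≥ 1 and let T ∈ ℝ^{N×N} have a strictly negative entry T_{m,k} < 0 for some indices m, k. Then row m of T lies outside the standard simplex Δ^{N-1}, and for every choice of W_Q, W_K ∈ ℝ^{d_h×d}, it is NOT the case that o_m(H) = ∑_{n=1}^N T_{m,n} · H_{n,1} for all H ∈ ℝ^{N×d}. In particular, softmax attention over patch tokens cannot compute inter-patch differencing operators (T_{m,m} > 0 and T_{m,k} < 0), and softmax attention over inverted (channel) tokens cannot compute cross-variate demixing operators with negative coefficients. (Patch and inverted tokenization failure lemmas.) -/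
open Matrix BigOperators Real

/-- **Patch and inverted tokenization failure lemmas.**
If `T ∈ ℝ^{N×N}` has a strictly negative entry `T_{m,k} < 0`, then row `m` of
`T` lies outside the standard simplex `Δ^{N-1}`, and for every choice of
parameters `Wq, Wk`, single-head softmax attention cannot satisfy
`o_m(H) = ∑ n, T_{m,n} · H_{n,1}` for all `H ∈ ℝ^{N×d}`. In particular softmax
attention cannot compute inter-patch differencing or signed cross-variate
demixing operators. -/
theorem negative_entry_unrealizable
    {N d dh : ℕ} (hN : 1 ≤ N) (hd : 1 ≤ d) (hdh : 1 ≤ dh)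
    (T : Matrix (Fin N) (Fin N) ℝ) (m k : Fin N) (hneg : T m k < 0) :
    (¬ ((∀ n, 0 ≤ T m n) ∧ ∑ n, T m n = 1)) ∧
    ∀ Wq Wk : Matrix (Fin dh) (Fin d) ℝ,
      ¬ (∀ H : Matrix (Fin N) (Fin d) ℝ,
          ∑ n, attnKernel Wq Wk H m n * H n ⟨0, hd⟩ = ∑ n, T m n * H n ⟨0, hd⟩) := by
  refine ⟨fun h => absurd (h.1 k) (not_le.mpr hneg), fun Wq Wk h => ?_⟩
  have h1 := h (fun n _ => if n = k then 1 else 0)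
  simp only [mul_ite, mul_one, mul_zero, Finset.sum_ite_eq', Finset.mem_univ, if_true] at h1
  have h2 : 0 ≤ attnKernel Wq Wk (fun n _ => if n = k then 1 else 0) m k := by
    unfold attnKernel
    positivity
  linarith
end
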